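/- (Pointwise form of the W_2 row of the G2 classification theorem.) Let φ ∈ Δ be a unit spinor and let S ∈ End(ℝ^7) be skew-adjoint and a derivation of the cross product, i.e. S(x×y) = S(x)×y + x×S(y) for all x, y ∈ ℝ^7 (so S lies in the Lie algebra g_2). Setting ν(x) := S(x)·φ, one has ν(x×y) = y·ν(x) − x·ν(y) + 2⟨y, S(x)⟩·φ for all x, y ∈ ℝ^7. -/

import Mathlib

open RealInnerProductSpace

noncomputable section

/-- The spin representation space Δ = ℝ^8. -/
abbrev Δ : Type := EuclideanSpace ℝ (Fin 8)

/-- The standard skew endomorphism E_{ij} of ℝ^8: u_i ↦ u_j, u_j ↦ -u_i, others ↦ 0. -/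
def E (i j : Fin 8) : Δ →ₗ[ℝ] Δ where
  toFun v := v i • EuclideanSpace.single j (1 : ℝ) - v j • EuclideanSpace.single i (1 : ℝ)
  map_add' x y := by
    simp only [PiLp.add_apply, add_smul]
    module
  map_smul' c x := by
    simp only [PiLp.smul_apply, smul_eq_mul, RingHom.id_apply, mul_smul]
    module

/-- The seven Clifford endomorphisms e_1, …, e_7 (indexed 0,…,6). -/
def cliff : Fin 7 → (Δ →ₗ[ℝ] Δ) :=
  ![  E 0 7 + E 1 6 - E 2 5 - E 3 4,
    - E 0 6 + E 1 7 + E 2 4 - E 3 5,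
    - E 0 5 + E 1 4 - E 2 7 + E 3 6,
    - E 0 4 - E 1 5 - E 2 6 - E 3 7,
    - E 0 2 - E 1 3 + E 4 6 + E 5 7,
      E 0 3 - E 1 2 - E 4 7 + E 5 6,
      E 0 1 - E 2 3 - E 4 5 + E 6 7]

/-- j = e_1 ∘ e_2 ∘ e_3 ∘ e_4 ∘ e_5 ∘ e_6. -/
def jmap : Δ →ₗ[ℝ] Δ :=
  cliff 0 ∘ₗ cliff 1 ∘ₗ cliff 2 ∘ₗ cliff 3 ∘ₗ cliff 4 ∘ₗ cliff 5

/-- Clifford multiplication of a vector x ∈ ℝ^6 on a spinor. -/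
def cm6 (x : EuclideanSpace ℝ (Fin 6)) (φ : Δ) : Δ :=
  ∑ i : Fin 6, x i • cliff i.castSucc φ

/-- Clifford multiplication of a vector x ∈ ℝ^7 on a spinor. -/
def cm7 (x : EuclideanSpace ℝ (Fin 7)) (φ : Δ) : Δ :=
  ∑ i : Fin 7, x i • cliff i φ


/-- Standard basis vector of ℝ^7. -/
def v7 (i : Fin 7) : EuclideanSpace ℝ (Fin 7) := EuclideanSpace.single i (1 : ℝ)

/-- The G₂ 3-form Φ_φ(x,y,z) = ⟨x·y·z·φ, φ⟩ on ℝ^7. -/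
def PhiP (φ : Δ) (x y z : EuclideanSpace ℝ (Fin 7)) : ℝ :=
  ⟪cm7 x (cm7 y (cm7 z φ)), φ⟫

/-- Action of a trilinear form on ℝ^7 on a spinor:
τ·χ := Σ_{i<j<k} τ(v_i,v_j,v_k) e_i(e_j(e_k(χ))). -/
def tact7 (τ : EuclideanSpace ℝ (Fin 7) → EuclideanSpace ℝ (Fin 7) →
    EuclideanSpace ℝ (Fin 7) → ℝ) (χ : Δ) : Δ :=
  ∑ i : Fin 7, ∑ j : Fin 7, ∑ k : Fin 7,
    if i < j ∧ j < k then
      τ (v7 i) (v7 j) (v7 k) • cliff i (cliff j (cliff k χ))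
    else 0

/-- Action of a bilinear form on ℝ^7 on a spinor:
σ·χ := Σ_{i<j} σ(v_i,v_j) e_i(e_j(χ)). -/
def bact7 (σ : EuclideanSpace ℝ (Fin 7) → EuclideanSpace ℝ (Fin 7) → ℝ) (χ : Δ) : Δ :=
  ∑ i : Fin 7, ∑ j : Fin 7,
    if i < j then σ (v7 i) (v7 j) • cliff i (cliff j χ) else 0

/-!
Clifford multiplication on a unit spinor `φ` embeds `V` isometrically into `φᗮ`, and since the
spinor space has dimension `dim V + 1` this embedding is onto. The spinor `y·x·φ + ⟨x, y⟩ φ` is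
orthogonal to `φ`, hence of the form `v·φ`, and pairing with `z·φ` identifies `v` as `x × y`.
Applying `(x × y)·φ = y·x·φ + ⟨x, y⟩ φ` to both terms of `S x × y + x × S y`, anticommuting `S y`
past `x` and using skewness of `S` gives the formula.
-/

section CliffordAction

variable {V W : Type*} [NormedAddCommGroup V] [InnerProductSpace ℝ V]
  [NormedAddCommGroup W] [InnerProductSpace ℝ W]

/-- An orthogonal Clifford module: vectors of `V` act on spinors in `W` by skew-adjoint
endomorphisms with `x·x·ψ = -|x|² ψ`, the sign convention for which unit vectors act
isometrically. -/
structure IsCliffordAction (c : V →ₗ[ℝ] Module.End ℝ W) : Prop where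
  inner_apply_left (x : V) (ψ χ : W) : ⟪c x ψ, χ⟫ = -⟪ψ, c x χ⟫
  apply_apply_self (x : V) (ψ : W) : c x (c x ψ) = -(⟪x, x⟫ • ψ)

namespace IsCliffordAction

variable {c : V →ₗ[ℝ] Module.End ℝ W} {φ : W}

theorem apply_apply_add_swap (hc : IsCliffordAction c) (x y : V) (ψ : W) :
    c x (c y ψ) + c y (c x ψ) = -((2 * ⟪x, y⟫) • ψ) := by
  have polarized := hc.apply_apply_self (x + y) ψ
  simp only [map_add, LinearMap.add_apply, hc.apply_apply_self, inner_add_left, inner_add_right,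
    real_inner_comm x y] at polarized
  linear_combination (norm := module) polarized

theorem inner_apply_self (hc : IsCliffordAction c) (x : V) (ψ : W) : ⟪c x ψ, ψ⟫ = 0 := by
  linarith [hc.inner_apply_left x ψ ψ, real_inner_comm ψ (c x ψ)]

theorem inner_apply_apply (hc : IsCliffordAction c) (x y : V) (ψ : W) :
    ⟪c x ψ, c y ψ⟫ = ⟪x, y⟫ * ⟪ψ, ψ⟫ := by
  have swap : ⟪c x (c y ψ), ψ⟫ = ⟪c y (c x ψ), ψ⟫ := by
    rw [hc.inner_apply_left, hc.inner_apply_left, neg_neg, real_inner_comm]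
  have anticomm := congrArg (⟪·, ψ⟫) (hc.apply_apply_add_swap x y ψ)
  simp only [inner_add_left, inner_neg_left, real_inner_smul_left] at anticomm
  linarith [hc.inner_apply_left y (c x ψ) ψ]

theorem range_flip_eq_orthogonal (hc : IsCliffordAction c)
    (hdim : Module.finrank ℝ W = Module.finrank ℝ V + 1) (hφ : φ ≠ 0) :
    LinearMap.range (c.flip φ) = (ℝ ∙ φ)ᗮ := by
  have : Fact (Module.finrank ℝ W = Module.finrank ℝ V + 1) := ⟨hdim⟩
  have : FiniteDimensional ℝ W := .of_finrank_eq_succ hdim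
  have injective : Function.Injective (c.flip φ) := by
    refine (injective_iff_map_eq_zero _).2 fun x hx ↦ ?_
    rw [LinearMap.flip_apply] at hx
    simpa [hx, hφ] using hc.inner_apply_apply x x φ
  refine Submodule.eq_of_le_of_finrank_eq ?_ ?_
  · rintro _ ⟨x, rfl⟩
    rw [Submodule.mem_orthogonal_singleton_iff_inner_left]
    exact hc.inner_apply_self x φ
  · rw [LinearMap.finrank_range_of_inj injective,
      Submodule.finrank_orthogonal_span_singleton (n := Module.finrank ℝ V) hφ]

theorem apply_cross (hc : IsCliffordAction c)
    (hdim : Module.finrank ℝ W = Module.finrank ℝ V + 1) (hφ : ⟪φ, φ⟫ = 1)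
    {x y v : V} (hv : ∀ z, ⟪v, z⟫ = ⟪c x (c y (c z φ)), φ⟫) :
    c v φ = c y (c x φ) + ⟪x, y⟫ • φ := by
  have orthogonal : c y (c x φ) + ⟪x, y⟫ • φ ∈ (ℝ ∙ φ)ᗮ := by
    rw [Submodule.mem_orthogonal_singleton_iff_inner_left, inner_add_left, real_inner_smul_left,
      hc.inner_apply_left, hc.inner_apply_apply, hφ]
    ring
  have hφ₀ : φ ≠ 0 := by rintro rfl; simp at hφ
  rw [← hc.range_flip_eq_orthogonal hdim hφ₀] at orthogonal
  obtain ⟨u, hu : c u φ = _⟩ := orthogonal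
  suffices v = u by rw [this, hu]
  refine ext_inner_right ℝ fun z ↦ ?_
  calc
    ⟪v, z⟫ = ⟪c y (c x φ), c z φ⟫ := by
      rw [hv, hc.inner_apply_left, hc.inner_apply_left, neg_neg, real_inner_comm]
    _ = ⟪c u φ, c z φ⟫ := by
      rw [hu, inner_add_left, real_inner_smul_left, real_inner_comm (c z φ) φ,
        hc.inner_apply_self, mul_zero, add_zero]
    _ = ⟪u, z⟫ := by rw [hc.inner_apply_apply, hφ, mul_one]

end IsCliffordAction

theorem W2_row_general {c : V →ₗ[ℝ] Module.End ℝ W} (hc : IsCliffordAction c)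
    (hdim : Module.finrank ℝ W = Module.finrank ℝ V + 1) {φ : W} (hφ : ⟪φ, φ⟫ = 1)
    {cross : V → V → V} (hcross : ∀ x y z, ⟪cross x y, z⟫ = ⟪c x (c y (c z φ)), φ⟫)
    {S : V → V} (hskew : ∀ x y, ⟪S x, y⟫ = -⟪x, S y⟫)
    (hder : ∀ x y, S (cross x y) = cross (S x) y + cross x (S y)) (x y : V) :
    c (S (cross x y)) φ = c y (c (S x) φ) - c x (c (S y) φ) + (2 * ⟪y, S x⟫) • φ := by
  have skew : ⟪x, S y⟫ = -⟪y, S x⟫ := by rw [real_inner_comm (S x), hskew, neg_neg]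
  calc
    c (S (cross x y)) φ = c (cross (S x) y) φ + c (cross x (S y)) φ := by
      rw [hder, map_add, LinearMap.add_apply]
    _ = (c y (c (S x) φ) + ⟪S x, y⟫ • φ) + (c (S y) (c x φ) + ⟪x, S y⟫ • φ) := by
      rw [hc.apply_cross hdim hφ (hcross (S x) y), hc.apply_cross hdim hφ (hcross x (S y))]
    _ = c y (c (S x) φ) - c x (c (S y) φ) + (2 * ⟪y, S x⟫) • φ := by
      have anticomm := hc.apply_apply_add_swap x (S y) φ
      rw [skew] at anticomm ⊢
      rw [real_inner_comm y (S x)]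
      linear_combination (norm := module) anticomm

end CliffordAction

section SpinRepresentation

/-- Clifford multiplication `cm7` of `ℝ⁷` on `Δ`, bundled as a linear map into endomorphisms. -/
def cm7Hom : EuclideanSpace ℝ (Fin 7) →ₗ[ℝ] Module.End ℝ Δ :=
  ∑ i, (EuclideanSpace.projₗ i).smulRight (cliff i)

theorem cm7Hom_apply (x : EuclideanSpace ℝ (Fin 7)) (ψ : Δ) : cm7Hom x ψ = cm7 x ψ := by
  simp [cm7Hom, cm7]

theorem inner_E_left (i j : Fin 8) (ψ χ : Δ) : ⟪E i j ψ, χ⟫ = -⟪ψ, E i j χ⟫ := by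
  simp only [E, LinearMap.coe_mk, AddHom.coe_mk, inner_sub_left, inner_sub_right,
    real_inner_smul_left, real_inner_smul_right, EuclideanSpace.inner_single_left,
    EuclideanSpace.inner_single_right, map_one, conj_trivial]
  ring

theorem inner_cliff_left (i : Fin 7) (ψ χ : Δ) : ⟪cliff i ψ, χ⟫ = -⟪ψ, cliff i χ⟫ := by
  fin_cases i <;>
    simp [cliff, inner_add_left, inner_add_right, inner_sub_left, inner_sub_right,
      inner_E_left] <;> ring

theorem inner_cm7_left (x : EuclideanSpace ℝ (Fin 7)) (ψ χ : Δ) :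
    ⟪cm7 x ψ, χ⟫ = -⟪ψ, cm7 x χ⟫ := by
  simp [cm7, sum_inner, inner_sum, real_inner_smul_left, real_inner_smul_right, inner_cliff_left]

theorem cm7_eq (x : EuclideanSpace ℝ (Fin 7)) (ψ : Δ) :
    cm7 x ψ = !₂[
      -x 0 * ψ 7 + x 1 * ψ 6 + x 2 * ψ 5 + x 3 * ψ 4 + x 4 * ψ 2 - x 5 * ψ 3 - x 6 * ψ 1,
      -x 0 * ψ 6 - x 1 * ψ 7 - x 2 * ψ 4 + x 3 * ψ 5 + x 4 * ψ 3 + x 5 * ψ 2 + x 6 * ψ 0,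
      x 0 * ψ 5 - x 1 * ψ 4 + x 2 * ψ 7 + x 3 * ψ 6 - x 4 * ψ 0 - x 5 * ψ 1 + x 6 * ψ 3,
      x 0 * ψ 4 + x 1 * ψ 5 - x 2 * ψ 6 + x 3 * ψ 7 - x 4 * ψ 1 + x 5 * ψ 0 - x 6 * ψ 2,
      -x 0 * ψ 3 + x 1 * ψ 2 + x 2 * ψ 1 - x 3 * ψ 0 - x 4 * ψ 6 + x 5 * ψ 7 + x 6 * ψ 5,
      -x 0 * ψ 2 - x 1 * ψ 3 - x 2 * ψ 0 - x 3 * ψ 1 - x 4 * ψ 7 - x 5 * ψ 6 - x 6 * ψ 4,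
      x 0 * ψ 1 - x 1 * ψ 0 + x 2 * ψ 3 - x 3 * ψ 2 + x 4 * ψ 4 + x 5 * ψ 5 - x 6 * ψ 7,
      x 0 * ψ 0 + x 1 * ψ 1 - x 2 * ψ 2 - x 3 * ψ 3 + x 4 * ψ 5 - x 5 * ψ 4 + x 6 * ψ 6] := by
  ext i
  fin_cases i <;> simp [cm7, cliff, E, Fin.sum_univ_succ, Fin.ext_iff] <;> ring

theorem cm7_cm7_self (x : EuclideanSpace ℝ (Fin 7)) (ψ : Δ) :
    cm7 x (cm7 x ψ) = -(⟪x, x⟫ • ψ) := by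
  ext i
  fin_cases i <;> simp [cm7_eq, EuclideanSpace.real_norm_sq_eq, Fin.sum_univ_seven] <;> ring

theorem isCliffordAction_cm7Hom : IsCliffordAction cm7Hom where
  inner_apply_left x ψ χ := by simpa only [cm7Hom_apply] using inner_cm7_left x ψ χ
  apply_apply_self x ψ := by simpa only [cm7Hom_apply] using cm7_cm7_self x ψ

end SpinRepresentation

/-- Pointwise form of the W₂ row of the G₂ classification theorem: if S is
skew-adjoint and a derivation of the cross product (so S ∈ g₂), then
ν(x×y) = y·ν(x) - x·ν(y) + 2⟨y, S(x)⟩·φ, where ν(x) := S(x)·φ. -/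
theorem W2_row (φ : Δ) (hφ : ⟪φ, φ⟫ = 1)
    (cross : EuclideanSpace ℝ (Fin 7) → EuclideanSpace ℝ (Fin 7) →
      EuclideanSpace ℝ (Fin 7))
    (hcross : ∀ x y z : EuclideanSpace ℝ (Fin 7), ⟪cross x y, z⟫ = PhiP φ x y z)
    (S : EuclideanSpace ℝ (Fin 7) →ₗ[ℝ] EuclideanSpace ℝ (Fin 7))
    (hskew : ∀ x y : EuclideanSpace ℝ (Fin 7), ⟪S x, y⟫ = -⟪x, S y⟫)
    (hder : ∀ x y : EuclideanSpace ℝ (Fin 7),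
      S (cross x y) = cross (S x) y + cross x (S y)) :
    ∀ x y : EuclideanSpace ℝ (Fin 7),
      cm7 (S (cross x y)) φ =
        cm7 y (cm7 (S x) φ) - cm7 x (cm7 (S y) φ) + (2 * ⟪y, S x⟫) • φ := by
  intro x y
  have hdim : Module.finrank ℝ Δ = Module.finrank ℝ (EuclideanSpace ℝ (Fin 7)) + 1 := by simp
  simpa only [cm7Hom_apply] using W2_row_general isCliffordAction_cm7Hom hdim hφ
    (by simpa only [cm7Hom_apply, PhiP] using hcross) hskew hder x y

end
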